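/- There exists an 𝔽_2-linear subspace C of 𝔽_2^{100} of dimension 28 such that every nonzero element of C has Hamming weight at least 27. -/

import Mathlib

/-!
The code is quasi-cyclic of index 4 (invariant under `i ↦ i + 4` on 100 coordinates), has a
generator matrix which is the identity on the first 28 coordinates, and its generators are pairwise
orthogonal with weights divisible by 4. Hence all weights are divisible by 4, and a nonzero
word of weight less than 27 has weight at most 24. By the cycle lemma, some rotation of such a word
has weight at most `24 * k / 25 < k` on the first `4 * k` coordinates for every `k ≥ 1`, that is,
at most `i / 4` on the coordinates `0, …, i`. The first 28 coordinates determine the word, and fewer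
than 100,000 of the `2 ^ 28` combinations of the generators satisfy these bounds; a search through
them finds no nonzero word of weight less than 27.
-/

open Finset Matrix

section PrefixSum

theorem exists_shift_prefix_sum_le_mean {R : Type*} [CommRing R] [LinearOrder R]
    [IsStrictOrderedRing R] {f : ℕ → R} {q n : ℕ} (hn : 0 < n)
    (hf : Function.Periodic f (q * n)) :
    ∃ t, ∀ k, n * ∑ i ∈ range (q * k), f (q * t + i) ≤ k * ∑ i ∈ range (q * n), f i := by
  let excess (j : ℕ) : R := n * ∑ i ∈ range (q * j), f i - j * ∑ i ∈ range (q * n), f i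
  have excess_periodic : Function.Periodic excess n := fun j ↦ by
    have hsum : ∑ i ∈ range (q * (j + n)), f i =
        ∑ i ∈ range (q * n), f i + ∑ i ∈ range (q * j), f i := by
      rw [mul_add, add_comm, sum_range_add]
      simp only [add_comm (q * n), hf _]
    simp only [excess, hsum]
    push_cast
    ring
  obtain ⟨t, -, ht⟩ := exists_max_image (range n) excess ⟨0, mem_range.2 hn⟩
  have excess_le (j : ℕ) : excess j ≤ excess t := by
    rw [← excess_periodic.map_mod_nat j]
    exact ht _ (mem_range.2 (j.mod_lt hn))
  refine ⟨t, fun k ↦ ?_⟩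
  have hk := excess_le (t + k)
  simp only [excess, mul_add q, sum_range_add] at hk
  push_cast at hk
  linarith

theorem exists_shift_prefix_sum_le_div {f : ℕ → ℕ} {q n : ℕ} (hq : 0 < q)
    (hf : Function.Periodic f (q * n)) (hsum : ∑ i ∈ range (q * n), f i < n) :
    ∃ t, ∀ i, ∑ j ∈ range (i + 1), f (q * t + j) ≤ i / q := by
  obtain ⟨t, ht⟩ := exists_shift_prefix_sum_le_mean (f := fun i ↦ (f i : ℤ)) (q := q)
    (Nat.zero_lt_of_lt hsum) fun i ↦ congrArg Nat.cast (hf i)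
  refine ⟨t, fun i ↦ Nat.le_of_lt_succ ?_⟩
  have hblocks : n * ∑ j ∈ range (q * (i / q + 1)), f (q * t + j) ≤
      (i / q + 1) * ∑ j ∈ range (q * n), f j := by
    exact_mod_cast ht (i / q + 1)
  have hle : i + 1 ≤ q * (i / q + 1) := Nat.lt_mul_div_succ i hq
  calc ∑ j ∈ range (i + 1), f (q * t + j)
      ≤ ∑ j ∈ range (q * (i / q + 1)), f (q * t + j) :=
        sum_le_sum_of_subset (range_subset_range.2 hle)
    _ < i / q + 1 := by
        refine Nat.lt_of_mul_lt_mul_left (a := n) (hblocks.trans_lt ?_)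
        rw [mul_comm n]
        exact Nat.mul_lt_mul_of_pos_left hsum (Nat.succ_pos _)

theorem sum_Iic_fin_eq_sum_range {M : Type*} [AddCommMonoid M] {n : ℕ} (f : ℕ → M) (i : Fin n) :
    ∑ j ∈ Iic i, f j = ∑ j ∈ range (i + 1), f j := by
  rw [Nat.range_succ_eq_Iic, ← Fin.map_valEmbedding_Iic, sum_map]
  rfl

theorem sum_Iic_fin_succ {M : Type*} [AddCommMonoid M] {n : ℕ} (f : Fin (n + 1) → M) (i : Fin n) :
    ∑ j ∈ Iic i.succ, f j = f 0 + ∑ j ∈ Iic i, f j.succ := by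
  simp only [← filter_ge_eq_Iic, sum_filter, Fin.sum_univ_succ, Fin.zero_le, if_true,
    Fin.succ_le_succ_iff]

end PrefixSum

section HammingWeight

variable {ι κ : Type*} [Fintype ι] [Fintype κ]

theorem zmod_two_eq_zero_or_eq_one : ∀ c : ZMod 2, c = 0 ∨ c = 1 := by
  decide

theorem hammingNorm_eq_sum_val (v : ι → ZMod 2) : hammingNorm v = ∑ i, (v i).val := by
  have indicator_eq_val : ∀ x : ZMod 2, (if x ≠ 0 then 1 else 0) = x.val := by decide
  simp only [hammingNorm, card_filter, indicator_eq_val]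

theorem hammingNorm_comp_equiv {M : Type*} [Zero M] [DecidableEq M] (v : ι → M) (σ : κ ≃ ι) :
    hammingNorm (v ∘ σ) = hammingNorm v := by
  simp only [hammingNorm, card_filter, Function.comp_apply]
  exact σ.sum_comp fun i ↦ if v i ≠ 0 then 1 else 0

theorem hammingNorm_add_add_two_mul_hammingNorm_mul (v w : ι → ZMod 2) :
    hammingNorm (v + w) + 2 * hammingNorm (v * w) = hammingNorm v + hammingNorm w := by
  have val_add_mul : ∀ x y : ZMod 2, (x + y).val + 2 * (x * y).val = x.val + y.val := by decide
  simp only [hammingNorm_eq_sum_val, mul_sum, ← sum_add_distrib, Pi.add_apply, Pi.mul_apply,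
    val_add_mul]

theorem natCast_hammingNorm_mul (v w : ι → ZMod 2) : (hammingNorm (v * w) : ZMod 2) = v ⬝ᵥ w := by
  simp [hammingNorm_eq_sum_val, dotProduct]

theorem four_dvd_hammingNorm_add_iff {v w : ι → ZMod 2} (hv : 4 ∣ hammingNorm v)
    (hw : 4 ∣ hammingNorm w) : 4 ∣ hammingNorm (v + w) ↔ v ⬝ᵥ w = 0 := by
  have h := hammingNorm_add_add_two_mul_hammingNorm_mul v w
  rw [← natCast_hammingNorm_mul, ZMod.natCast_eq_zero_iff]
  omega

theorem four_dvd_hammingNorm_vecMul {A : Matrix κ ι (ZMod 2)} (hA : A * Aᵀ = 0)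
    (hrow : ∀ i, 4 ∣ hammingNorm (A i)) (m : κ → ZMod 2) : 4 ∣ hammingNorm (m ᵥ* A) := by
  have dotProduct_eq_zero (x y : κ → ZMod 2) : (x ᵥ* A) ⬝ᵥ (y ᵥ* A) = 0 := by
    rw [← mulVec_transpose A y, dotProduct_mulVec, vecMul_vecMul, hA, vecMul_zero,
      zero_dotProduct]
  classical
  induction m using Pi.single_induction with
  | zero => simp
  | add x y hx hy =>
    rw [add_vecMul]
    exact (four_dvd_hammingNorm_add_iff hx hy).2 (dotProduct_eq_zero x y)
  | single i c =>
    obtain rfl | rfl := zmod_two_eq_zero_or_eq_one c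
    · simp
    · rw [single_one_vecMul]
      exact hrow i

end HammingWeight

section RowSpace

variable {R κ ι : Type*} [CommSemiring R] [Fintype κ] {A : Matrix κ ι R}

theorem comp_mem_range_vecMulLinear {σ : ι → ι}
    (hσ : ∀ i, A i ∘ σ ∈ LinearMap.range A.vecMulLinear) {v : ι → R}
    (hv : v ∈ LinearMap.range A.vecMulLinear) : v ∘ σ ∈ LinearMap.range A.vecMulLinear := by
  obtain ⟨m, rfl⟩ := hv
  have hcomp : (m ᵥ* A) ∘ σ = ∑ i, m i • (A i ∘ σ) := by
    ext j
    simp [vecMul, dotProduct]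
  rw [vecMulLinear_apply, hcomp]
  exact sum_mem fun i _ ↦ Submodule.smul_mem _ _ (hσ i)

variable [DecidableEq κ] {s : κ → ι}

theorem vecMul_comp_of_submatrix_eq_one (hA : A.submatrix id s = 1) (m : κ → R) :
    (m ᵥ* A) ∘ s = m := by
  calc (m ᵥ* A) ∘ s = m ᵥ* A.submatrix id s := rfl
    _ = m := by rw [hA, vecMul_one]

theorem comp_vecMul_of_mem_range (hA : A.submatrix id s = 1) {v : ι → R}
    (hv : v ∈ LinearMap.range A.vecMulLinear) : (v ∘ s) ᵥ* A = v := by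
  obtain ⟨m, rfl⟩ := hv
  rw [vecMulLinear_apply, vecMul_comp_of_submatrix_eq_one hA]

theorem finrank_range_vecMulLinear_of_submatrix_eq_one [StrongRankCondition R]
    (hA : A.submatrix id s = 1) :
    Module.finrank R (LinearMap.range A.vecMulLinear) = Fintype.card κ := by
  have hinj : Function.Injective A.vecMulLinear :=
    Function.LeftInverse.injective (g := (· ∘ s)) (vecMul_comp_of_submatrix_eq_one hA)
  rw [LinearMap.finrank_range_of_inj hinj, Module.finrank_fintype_fun_eq_card]

end RowSpace

section Packing

/-- The word `v` as a number whose `i`-th digit in base `2 ^ b` is `v i`. It is for computation: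
addition of words becomes `xor`, and the weight of a word of length less than `2 ^ b - 1` is the
remainder modulo `2 ^ b - 1`. -/
def packed (b : ℕ) {n : ℕ} (v : Fin n → ZMod 2) : ℕ :=
  Nat.ofDigits (2 ^ b) (List.ofFn fun i ↦ (v i).val)

variable {b n k : ℕ}

theorem packed_succ (v : Fin (n + 1) → ZMod 2) :
    packed b v = 2 ^ b * packed b (vecTail v) + (v 0).val := by
  rw [packed, List.ofFn_succ, Nat.ofDigits_cons, add_comm]
  rfl

theorem two_pow_mul_add_xor {x y : ℕ} (hx : x < 2 ^ b) (hy : y < 2 ^ b) (u w : ℕ) :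
    (2 ^ b * u + x) ^^^ (2 ^ b * w + y) = 2 ^ b * (u ^^^ w) + (x ^^^ y) := by
  refine Nat.eq_of_testBit_eq fun i ↦ ?_
  rw [Nat.testBit_xor, Nat.testBit_two_pow_mul_add _ hx, Nat.testBit_two_pow_mul_add _ hy,
    Nat.testBit_two_pow_mul_add _ (Nat.xor_lt_two_pow hx hy)]
  split_ifs <;> simp only [Nat.testBit_xor]

theorem packed_add (hb : b ≠ 0) (v w : Fin n → ZMod 2) :
    packed b (v + w) = packed b v ^^^ packed b w := by
  have val_lt (x : ZMod 2) : x.val < 2 ^ b := x.val_lt.trans_le (Nat.le_self_pow hb 2)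
  have val_add_eq_xor : ∀ x y : ZMod 2, (x + y).val = x.val ^^^ y.val := by decide
  induction n with
  | zero => simp [packed]
  | succ n ih =>
    rw [packed_succ v, packed_succ w, two_pow_mul_add_xor (val_lt _) (val_lt _), ← ih,
      ← val_add_eq_xor, packed_succ]
    rfl

theorem packed_zero : packed b (0 : Fin n → ZMod 2) = 0 := by
  induction n with
  | zero => rfl
  | succ n ih =>
    rw [packed_succ, show vecTail (0 : Fin (n + 1) → ZMod 2) = 0 from rfl, ih]
    rfl

theorem packed_smul (c : ZMod 2) (v : Fin n → ZMod 2) :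
    packed b (c • v) = c.val * packed b v := by
  obtain rfl | rfl := zmod_two_eq_zero_or_eq_one c
  · simp [packed_zero]
  · rw [one_smul, ZMod.val_one, one_mul]

theorem packed_injective (hb : b ≠ 0) :
    Function.Injective (packed b : (Fin n → ZMod 2) → ℕ) := fun v w h ↦ by
  have digit_lt (u : Fin n → ZMod 2) : ∀ d ∈ List.ofFn fun i ↦ (u i).val, d < 2 ^ b := by
    rw [List.forall_mem_ofFn_iff]
    exact fun i ↦ (u i).val_lt.trans_le (Nat.le_self_pow hb 2)
  have hdigits := Nat.ofDigits_inj_of_len_eq (Nat.one_lt_two_pow hb)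
    (by simp only [List.length_ofFn]) (digit_lt v) (digit_lt w) h
  exact funext fun i ↦ ZMod.val_injective 2 (congrFun (List.ofFn_injective hdigits) i)

theorem packed_mod_eq_hammingNorm (hn : n < 2 ^ b - 1) (v : Fin n → ZMod 2) :
    packed b v % (2 ^ b - 1) = hammingNorm v := by
  have hbase : 2 ^ b ≡ 1 [MOD 2 ^ b - 1] :=
    ((Nat.modEq_iff_dvd' Nat.one_le_two_pow).2 dvd_rfl).symm
  have hmod : packed b v ≡ hammingNorm v [MOD 2 ^ b - 1] := by
    rw [hammingNorm_eq_sum_val, ← List.sum_ofFn, ← Nat.ofDigits_one]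
    exact Nat.ofDigits_modEq' _ _ _ hbase _
  have hlt : hammingNorm v < 2 ^ b - 1 :=
    (hammingNorm_le_card_fintype.trans_eq (Fintype.card_fin n)).trans_lt hn
  rw [hmod, Nat.mod_eq_of_lt hlt]

theorem packed_vecMul (hb : b ≠ 0) (A : Matrix (Fin k) (Fin n) (ZMod 2)) (m : Fin k → ZMod 2) :
    packed b (m ᵥ* A) =
      (List.ofFn fun i ↦ (m i).val * packed b (A i)).foldr Nat.xor 0 := by
  rw [vecMul_eq_sum]
  induction k with
  | zero => exact packed_zero
  | succ k ih =>
    rw [Fin.sum_univ_succ, packed_add hb, packed_smul, List.ofFn_succ, List.foldr_cons]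
    exact congrArg (Nat.xor _) (ih (fun i ↦ A i.succ) fun i ↦ m i.succ)

end Packing

section Search

/-- Depth-first test of `p` on `a` combined by `xor` with a selection of the numbers `r` from a list
of pairs `(c, r)`, over the selections in which `r` may be chosen only while `used` and the number
of choices made so far add up to less than `c`. Applying `Nat.ble` and `Nat.xor` directly spares the
kernel unfolding their instances at every node of the search. -/
def checkCombinations (p : ℕ → Bool) : List (ℕ × ℕ) → ℕ → ℕ → Bool
  | [], _, a => p a
  | (c, r) :: l, used, a =>
    checkCombinations p l used a &&
      (Nat.ble c used || checkCombinations p l (used + 1) (Nat.xor a r))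

theorem packed_vecMul_of_checkCombinations {b k n : ℕ} (hb : b ≠ 0) {p : ℕ → Bool}
    {A : Matrix (Fin k) (Fin n) (ZMod 2)} {cap : Fin k → ℕ} {used a : ℕ}
    (h : checkCombinations p (List.ofFn fun i ↦ (cap i, packed b (A i))) used a)
    {m : Fin k → ZMod 2} (hm : ∀ i, used + ∑ j ∈ Iic i, (m j).val ≤ cap i) :
    p (a ^^^ packed b (m ᵥ* A)) := by
  induction k generalizing used a with
  | zero =>
    rw [vecMul_eq_sum, Fin.sum_univ_zero, packed_zero, Nat.xor_zero]
    exact h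
  | succ k ih =>
    rw [List.ofFn_succ, checkCombinations, Bool.and_eq_true, Bool.or_eq_true,
      Nat.ble_eq] at h
    have vecMul_succ : m ᵥ* A = m 0 • A 0 + vecTail m ᵥ* of (vecTail A) := by
      rw [vecMul_eq_sum, vecMul_eq_sum, Fin.sum_univ_succ]
      rfl
    have tail_le (i : Fin k) :
        used + (m 0).val + ∑ j ∈ Iic i, (vecTail m j).val ≤ cap i.succ := by
      simpa only [sum_Iic_fin_succ, ← add_assoc, vecTail, Function.comp_apply] using hm i.succ
    rw [vecMul_succ, packed_add hb, packed_smul, ← Nat.xor_assoc]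
    obtain hm0 | hm0 := zmod_two_eq_zero_or_eq_one (m 0)
    · rw [hm0] at tail_le ⊢
      rw [ZMod.val_zero, zero_mul, Nat.xor_zero]
      exact ih h.1 tail_le
    · have not_capped : ¬ cap 0 ≤ used := by
        have h_cap := hm 0
        rw [show Iic (0 : Fin (k + 1)) = {0} from Iic_bot, sum_singleton, hm0, ZMod.val_one]
          at h_cap
        exact Nat.not_le_of_lt h_cap
      rw [hm0] at tail_le ⊢
      rw [ZMod.val_one, one_mul]
      exact ih (h.2.resolve_left not_capped) tail_le

end Search

section Code

/-- The generators of the code, with coordinate `j` stored as bit `j`: the last seven hexadecimal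
digits are the systematic part, the first eighteen the parity checks. Reading the coordinates by
their residue modulo 4 gives the four cyclic blocks of length 25. -/
def generatorRow : Fin 28 → ℕ :=
  ![0xa73525c40d9e26d5b80000001, 0xfc578f1f356cb3e4730000002, 0x1fe3d05def6e5059460000004,
    0xbc78b107cc92dae0690000008, 0x337d6258201c045f9a0000010, 0x3d813a724dc521cfd40000020,
    0x5908201afb7b2341d80000040, 0x20910ba03d4de1d7320000080, 0x6cb48f593932d0c86b0000100,
    0x83710dffe4a089cc8b0000200, 0x2854f436554242917e0000400, 0xf547351ce1b2ae97530000800,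
    0x28fcaad1492fef3b850001000, 0x8b686ef9869a4628d90002000, 0x7918cc7a61489af3930004000,
    0xac8a9a4f0024f6fdd40008000, 0x739d220ba792405c230010000, 0x0afe5e9fa536b86df90020000,
    0xd50dbd20c3156a51bd0040000, 0x88869ae8fbb106d95a0080000, 0x7d535a3caeb8c0aabd0100000,
    0xafe5e9fa536b86df900200000, 0x547596921f340977470400000, 0x34111f887782b775c90800000,
    0x91b4d94c3c10cfc35d1000000, 0xbe71a1bdcf4604fd1a2000000, 0xff8f9cb811b0e1f88e4000000,
    0x1a73525c40d9e26d5b8000000]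

/-- The systematic generator matrix of the code, unpacked from `generatorRow`. -/
def generatorMatrix : Matrix (Fin 28) (Fin 100) (ZMod 2) :=
  of fun i j ↦ if (generatorRow i).testBit j then 1 else 0

/-- The `[100, 28]` code, encoded as the row space of `generatorMatrix`. -/
def code : Submodule (ZMod 2) (Fin 100 → ZMod 2) :=
  LinearMap.range generatorMatrix.vecMulLinear

theorem generatorMatrix_submatrix_eq_one :
    generatorMatrix.submatrix id (Fin.castLE (by norm_num : 28 ≤ 100)) = 1 := by
  decide +kernel

theorem four_dvd_hammingNorm_generatorMatrix (i : Fin 28) :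
    4 ∣ hammingNorm (generatorMatrix i) := by
  revert i
  decide +kernel

theorem generatorMatrix_mul_transpose : generatorMatrix * generatorMatrixᵀ = 0 := by
  have four_dvd_packed_xor : ∀ i j, 4 ∣ Nat.mod
      (Nat.xor (packed 7 (generatorMatrix i)) (packed 7 (generatorMatrix j))) 127 := by
    decide +kernel
  ext i j
  refine (four_dvd_hammingNorm_add_iff (four_dvd_hammingNorm_generatorMatrix i)
    (four_dvd_hammingNorm_generatorMatrix j)).1 ?_
  rw [← packed_mod_eq_hammingNorm (b := 7) (by norm_num), packed_add (by norm_num)]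
  exact four_dvd_packed_xor i j

theorem generatorMatrix_comp_add_four_mem_code (i : Fin 28) :
    generatorMatrix i ∘ (· + 4) ∈ code := by
  have packed_eq : ∀ i, (List.ofFn fun k ↦
      (generatorMatrix i (Fin.castLE (by norm_num : 28 ≤ 100) k + 4)).val *
        packed 7 (generatorMatrix k)).foldr Nat.xor 0 =
      packed 7 (generatorMatrix i ∘ (· + 4)) := by
    decide +kernel
  refine ⟨fun k ↦ generatorMatrix i (Fin.castLE (by norm_num : 28 ≤ 100) k + 4),
    packed_injective (b := 7) (by norm_num) ?_⟩
  rw [vecMulLinear_apply, packed_vecMul (by norm_num), packed_eq]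

theorem comp_addRight_mem_code {v : Fin 100 → ZMod 2} (hv : v ∈ code) (t : ℕ) :
    v ∘ Equiv.addRight (Fin.ofNat 100 (4 * t)) ∈ code := by
  induction t with
  | zero => simpa using hv
  | succ t ih =>
    have shift_succ : v ∘ Equiv.addRight (Fin.ofNat 100 (4 * (t + 1))) =
        (v ∘ Equiv.addRight (Fin.ofNat 100 (4 * t))) ∘ (· + 4) := by
      ext i
      refine congrArg v (Fin.ext ?_)
      simp only [Equiv.coe_addRight, Fin.val_add, Fin.ofNat]
      omega
    rw [shift_succ]
    exact comp_mem_range_vecMulLinear generatorMatrix_comp_add_four_mem_code ih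

theorem checkCombinations_generatorMatrix :
    checkCombinations (fun a ↦ a == 0 || Nat.ble 27 (Nat.mod a 127))
      (List.ofFn fun i : Fin 28 ↦ (i / 4, packed 7 (generatorMatrix i))) 0 0 := by
  decide +kernel

theorem exists_shift_prefix_weight_le_div_four {v : Fin 100 → ZMod 2} (hv : hammingNorm v < 25) :
    ∃ t, ∀ i : Fin 28, ∑ j ∈ Iic i,
      (v (Fin.castLE (by norm_num) j + Fin.ofNat 100 (4 * t))).val ≤ i / 4 := by
  have hperiod : Function.Periodic (fun i ↦ (v (Fin.ofNat 100 i)).val) (4 * 25) := fun i ↦ by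
    simp only [Fin.ofNat, Nat.add_mod_right]
  have hsum : ∑ i ∈ range (4 * 25), (v (Fin.ofNat 100 i)).val < 25 := by
    rw [hammingNorm_eq_sum_val] at hv
    rw [← Fin.sum_univ_eq_sum_range (fun i ↦ (v (Fin.ofNat 100 i)).val)]
    simpa using hv
  obtain ⟨t, ht⟩ := exists_shift_prefix_sum_le_div (by norm_num) hperiod hsum
  refine ⟨t, fun i ↦ le_of_eq_of_le ?_ (ht i)⟩
  rw [← sum_Iic_fin_eq_sum_range fun j ↦ (v (Fin.ofNat 100 (4 * t + j))).val]
  refine sum_congr rfl fun j _ ↦ ?_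
  congr 2
  ext
  simp [Fin.val_add, add_comm]

theorem le_hammingNorm_of_mem_code {v : Fin 100 → ZMod 2} (hv : v ∈ code) (hv0 : v ≠ 0) :
    27 ≤ hammingNorm v := by
  by_contra! hlt
  have four_dvd : 4 ∣ hammingNorm v := by
    obtain ⟨m, rfl⟩ := hv
    exact four_dvd_hammingNorm_vecMul generatorMatrix_mul_transpose
      four_dvd_hammingNorm_generatorMatrix m
  obtain ⟨t, ht⟩ := exists_shift_prefix_weight_le_div_four (show hammingNorm v < 25 by omega)
  let u := v ∘ Equiv.addRight (Fin.ofNat 100 (4 * t))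
  have hu : u ∈ code := comp_addRight_mem_code hv t
  have hammingNorm_u : hammingNorm u = hammingNorm v := hammingNorm_comp_equiv _ _
  have checked := packed_vecMul_of_checkCombinations (by norm_num)
    checkCombinations_generatorMatrix (m := u ∘ Fin.castLE (by norm_num))
    fun i ↦ (zero_add _).trans_le (ht i)
  rw [comp_vecMul_of_mem_range generatorMatrix_submatrix_eq_one hu, Nat.zero_xor,
    Bool.or_eq_true, beq_iff_eq, Nat.ble_eq] at checked
  rcases checked with packed_eq_zero | h27
  · have hu0 : u = 0 := packed_injective (by norm_num) (packed_eq_zero.trans packed_zero.symm)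
    exact hv0 (hammingNorm_eq_zero.1 (by rw [← hammingNorm_u, hu0, hammingNorm_zero]))
  · have packed_mod : packed 7 u % 127 = hammingNorm u := packed_mod_eq_hammingNorm (by norm_num) u
    exact hlt.not_ge (by rwa [← hammingNorm_u, ← packed_mod])

end Code

/-- there exists an `𝔽₂`-linear code of length 100, dimension 28
and minimum distance at least 27. -/
theorem stmt13 :
    ∃ C : Submodule (ZMod 2) (Fin 100 → ZMod 2),
      Module.finrank (ZMod 2) C = 28 ∧
      ∀ v ∈ C, v ≠ 0 → 27 ≤ hammingNorm v := by
  refine ⟨code, ?_, fun v hv hv0 ↦ le_hammingNorm_of_mem_code hv hv0⟩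
  exact finrank_range_vecMulLinear_of_submatrix_eq_one generatorMatrix_submatrix_eq_one
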